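/- Let b = e0 − 2iβ²·C·e1 ∈ Q, where C = F·E − (i/4)(K − K^{-1}) is the Casimir element. Then b is central and invertible, and with evaluation element α = 1 and coevaluation element b, the quasi-Hopf antipode axioms hold: (i) for all a ∈ Q, writing Δ(a) = Σ a'⊗a'', one has Σ S(a')·a'' = ε(a)·1 and Σ a'·b·S(a'') = ε(a)·b; (ii) writing Φ = Σ Φ'⊗Φ''⊗Φ''' and Φ^{-1} = Σ \barΦ'⊗\barΦ''⊗\barΦ''', one has Σ S(Φ')·Φ''·b·S(Φ''') = 1 and Σ \barΦ'·b·S(\barΦ'')·\barΦ''' = 1. Hence (Q, Φ, S, α = 1, b) is a quasi-Hopf algebra. -/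

import Mathlib

open TensorProduct

set_option maxHeartbeats 1000000
set_option synthInstance.maxHeartbeats 400000

noncomputable section

/-- Generators of the restricted quantum group `Q = \bar U_i sl(2)`. -/
inductive QGen : Type
  | E | F | K | Kinv
deriving DecidableEq

/-- The free algebra on the generators. -/
abbrev FA : Type := FreeAlgebra ℂ QGen

def ιE : FA := FreeAlgebra.ι ℂ QGen.E
def ιF : FA := FreeAlgebra.ι ℂ QGen.F
def ιK : FA := FreeAlgebra.ι ℂ QGen.K
def ιKi : FA := FreeAlgebra.ι ℂ QGen.Kinv

/-- Defining relations of `\bar U_i sl(2)` (at `q = i`, i.e. `p = 2`). -/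
inductive QRel : FA → FA → Prop
  | KKi : QRel (ιK * ιKi) 1
  | KiK : QRel (ιKi * ιK) 1
  | KEKi : QRel (ιK * ιE * ιKi) (-ιE)
  | KFKi : QRel (ιK * ιF * ιKi) (-ιF)
  | EF : QRel (ιE * ιF - ιF * ιE) ((2 * Complex.I)⁻¹ • (ιK - ιKi))
  | Esq : QRel (ιE ^ 2) 0
  | Fsq : QRel (ιF ^ 2) 0
  | K4 : QRel (ιK ^ 4) 1

/-- The restricted quantum group `\bar U_i sl(2)`: the quotient of the free algebra
by the two-sided ideal generated by the defining relations. -/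
abbrev Q : Type := RingQuot QRel

def gE : Q := RingQuot.mkAlgHom ℂ QRel ιE
def gF : Q := RingQuot.mkAlgHom ℂ QRel ιF
def gK : Q := RingQuot.mkAlgHom ℂ QRel ιK
def gKi : Q := RingQuot.mkAlgHom ℂ QRel ιKi

section Gadgets

variable (k : Type) [Field k] (A : Type) [Ring A] [Algebra k A]

abbrev TP2 : Type := A ⊗[k] A
abbrev TP3 : Type := A ⊗[k] (A ⊗[k] A)
abbrev TP4 : Type := A ⊗[k] (A ⊗[k] (A ⊗[k] A))

/-- Multiplication `a ⊗ b ↦ a * b`. -/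
def mulA : TP2 k A →ₗ[k] A := LinearMap.mul' k A

/-- Tensor flip `a ⊗ b ↦ b ⊗ a`. -/
def flipA : TP2 k A →ₗ[k] TP2 k A := (TensorProduct.comm k A A).toLinearMap

/-- `a ↦ a ⊗ 1`. -/
def lTen : A →ₗ[k] TP2 k A := (TensorProduct.mk k A A).flip 1

/-- `a ↦ 1 ⊗ a`. -/
def rTen : A →ₗ[k] TP2 k A := TensorProduct.mk k A A 1

/-- `a ⊗ b ↦ a ⊗ b ⊗ 1`. -/
def emb12 : TP2 k A →ₗ[k] TP3 k A := TensorProduct.map LinearMap.id (lTen k A)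

/-- `a ⊗ b ↦ a ⊗ 1 ⊗ b`. -/
def emb13 : TP2 k A →ₗ[k] TP3 k A := TensorProduct.map LinearMap.id (rTen k A)

/-- `a ⊗ b ↦ 1 ⊗ a ⊗ b`. -/
def emb23 : TP2 k A →ₗ[k] TP3 k A := TensorProduct.mk k A (TP2 k A) 1

/-- `a ⊗ b ⊗ c ↦ a ⊗ c ⊗ b`. -/
def perm132 : TP3 k A →ₗ[k] TP3 k A := TensorProduct.map LinearMap.id (flipA k A)

/-- `a ⊗ b ⊗ c ↦ b ⊗ c ⊗ a`. -/
def perm231 : TP3 k A →ₗ[k] TP3 k A :=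
  (TensorProduct.assoc k A A A).toLinearMap ∘ₗ (TensorProduct.comm k A (TP2 k A)).toLinearMap

/-- `a ⊗ b ⊗ c ↦ c ⊗ a ⊗ b`. -/
def perm312 : TP3 k A →ₗ[k] TP3 k A :=
  (TensorProduct.comm k (TP2 k A) A).toLinearMap ∘ₗ (TensorProduct.assoc k A A A).symm.toLinearMap

/-- `a ⊗ b ⊗ c ↦ b ⊗ a ⊗ c`. -/
def perm213 : TP3 k A →ₗ[k] TP3 k A :=
  (TensorProduct.assoc k A A A).toLinearMap ∘ₗ
    (TensorProduct.map (flipA k A) LinearMap.id) ∘ₗ (TensorProduct.assoc k A A A).symm.toLinearMap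

variable {k A}

/-- `(Δ ⊗ id)` on two tensor factors, landing in the triple tensor product. -/
def copL (D : A →ₐ[k] TP2 k A) : TP2 k A →ₗ[k] TP3 k A :=
  (TensorProduct.assoc k A A A).toLinearMap ∘ₗ TensorProduct.map D.toLinearMap LinearMap.id

/-- `(id ⊗ Δ)` on two tensor factors. -/
def copR (D : A →ₐ[k] TP2 k A) : TP2 k A →ₗ[k] TP3 k A :=
  TensorProduct.map LinearMap.id D.toLinearMap

/-- `(ε ⊗ id) : A ⊗ A → A`. -/
def cuL (ce : A →ₐ[k] k) : TP2 k A →ₗ[k] A :=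
  (TensorProduct.lid k A).toLinearMap ∘ₗ TensorProduct.map ce.toLinearMap LinearMap.id

/-- `(id ⊗ ε) : A ⊗ A → A`. -/
def cuR (ce : A →ₐ[k] k) : TP2 k A →ₗ[k] A :=
  (TensorProduct.rid k A).toLinearMap ∘ₗ TensorProduct.map LinearMap.id ce.toLinearMap

/-- `(id ⊗ ε ⊗ id) : A ⊗ A ⊗ A → A ⊗ A`. -/
def cuMid (ce : A →ₐ[k] k) : TP3 k A →ₗ[k] TP2 k A :=
  TensorProduct.map LinearMap.id (cuL ce)

/-- `(Δ ⊗ id ⊗ id)`. -/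
def cop4_1 (D : A →ₐ[k] TP2 k A) : TP3 k A →ₗ[k] TP4 k A :=
  (TensorProduct.assoc k A A (TP2 k A)).toLinearMap ∘ₗ TensorProduct.map D.toLinearMap LinearMap.id

/-- `(id ⊗ Δ ⊗ id)`. -/
def cop4_2 (D : A →ₐ[k] TP2 k A) : TP3 k A →ₗ[k] TP4 k A :=
  TensorProduct.map LinearMap.id (copL D)

/-- `(id ⊗ id ⊗ Δ)`. -/
def cop4_3 (D : A →ₐ[k] TP2 k A) : TP3 k A →ₗ[k] TP4 k A :=
  TensorProduct.map LinearMap.id (copR D)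

/-- `a ⊗ b ⊗ c ↦ a ⊗ b ⊗ c ⊗ 1`, i.e. `Φ ↦ Φ ⊗ 1`. -/
def pad4 : TP3 k A →ₗ[k] TP4 k A :=
  TensorProduct.map LinearMap.id (TensorProduct.map LinearMap.id (lTen k A))

/-- `a ⊗ b ⊗ c ↦ f(a) * g(b) * h(c)`. -/
def tmap3 (f g h : A →ₗ[k] A) : TP3 k A →ₗ[k] A :=
  mulA k A ∘ₗ TensorProduct.map f (mulA k A ∘ₗ TensorProduct.map g h)

/-- `a ⊗ b ↦ S(a) * b`, used in the antipode axiom `m ∘ (S ⊗ id) ∘ Δ = 1·ε`. -/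
def antipL (s : A →ₗ[k] A) : TP2 k A →ₗ[k] A := mulA k A ∘ₗ TensorProduct.map s LinearMap.id

/-- `a ⊗ b ↦ a * S(b)`. -/
def antipR (s : A →ₗ[k] A) : TP2 k A →ₗ[k] A := mulA k A ∘ₗ TensorProduct.map LinearMap.id s

end Gadgets

/-- Central idempotent `e₀ = (1 + K²)/2`. -/
def e0 : Q := (2:ℂ)⁻¹ • (1 + gK ^ 2)

/-- Central idempotent `e₁ = (1 − K²)/2`. -/
def e1 : Q := (2:ℂ)⁻¹ • (1 - gK ^ 2)

/-- `f⁺ = −i F`. -/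
def fp : Q := (-Complex.I) • gF

/-- `f⁻ = E K⁻¹`. -/
def fm : Q := gE * gKi

/-- The Casimir element `C = FE − (i/4)(K − K⁻¹)`. -/
def Cas : Q := gF * gE - (Complex.I / 4) • (gK - gKi)

def t2 (a b : Q) : TP2 ℂ Q := a ⊗ₜ[ℂ] b

def t3 (a b c : Q) : TP3 ℂ Q := a ⊗ₜ[ℂ] (b ⊗ₜ[ℂ] c)

def eEF : Q := gE * gF
def eEK : Q := gE * gK
def eFK : Q := gF * gK
def eEFK : Q := gE * gF * gK

/-- `Φ^{010}` component of the coassociator. -/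
def Phi010 : TP3 ℂ Q :=
  t3 1 1 1 - (1 + Complex.I) • t3 gE gK gF + (1 - Complex.I) • t3 eFK gK eEK
    + (2:ℂ) • t3 eEFK 1 eEFK

/-- `Φ^{101}` component of the coassociator. -/
def Phi101 : TP3 ℂ Q :=
  (Complex.I - 1) • t3 1 gF eEK + t3 1 gK 1 + (2:ℂ) • t3 1 eEF eEFK
    - (1 + Complex.I) • t3 1 eEK gF - (1 + Complex.I) • t3 gE eFK 1
    + (2 * Complex.I) • t3 gE eEFK gF + (1 - Complex.I) • t3 eFK gE 1
    - (2 * Complex.I) • t3 eFK eEFK eEK - (2:ℂ) • t3 eEFK eEF 1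

/-- `Φ^{111}` component of the coassociator. -/
def Phi111 (β : ℂ) : TP3 ℂ Q :=
  (Complex.I * β ^ 2) • (
    (1 + Complex.I) • t3 1 gF eEK - t3 1 gK 1 - (2:ℂ) • t3 1 eEF 1
      - (2 * Complex.I) • t3 1 eEF eEFK + (1 + Complex.I) • t3 1 eEK gF
      - (1 + Complex.I) • t3 gE 1 gF + (1 + Complex.I) • t3 gE eFK 1
      + (2 * Complex.I) • t3 gE eFK eEFK + (2:ℂ) • t3 gE eEFK gF
      - (1 + Complex.I) • t3 eFK 1 eEK + (1 + Complex.I) • t3 eFK gE 1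
      + (2 * Complex.I) • t3 eFK gE eEFK + (2:ℂ) • t3 eFK eEFK eEK
      + (2 * Complex.I) • t3 eEFK gF eEK + (2 * Complex.I) • t3 eEFK gK eEFK
      - (2 * Complex.I) • t3 eEFK eEF 1 + (2 * Complex.I) • t3 eEFK eEK gF
      + (4:ℂ) • t3 eEFK eEF eEFK)

/-- The coassociator `Φ` of the quasi-Hopf algebra structure on `Q`. -/
def Phi (β : ℂ) : TP3 ℂ Q :=
  t3 e0 e0 e0 + t3 e1 e0 e0 + Phi010 * t3 e0 e1 e0 + t3 e0 e0 e1
    + t3 e1 e1 e0 + Phi101 * t3 e1 e0 e1 + t3 e0 e1 e1 + Phi111 β * t3 e1 e1 e1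

def R00 : TP2 ℂ Q :=
  (2:ℂ)⁻¹ • ((t2 1 1 + t2 1 gK + t2 gK 1 - t2 gK gK) * (t2 1 1 + (2 * Complex.I) • t2 gE gF))

def R01 : TP2 ℂ Q :=
  (2:ℂ)⁻¹ • ((t2 1 1 - Complex.I • t2 1 gK + t2 gK 1 + Complex.I • t2 gK gK) *
    (t2 1 1 + (1 - Complex.I) • t2 eFK eEK - (1 - Complex.I) • t2 gE gF
      + (1 + Complex.I) • t2 eEFK 1 + (2 * Complex.I) • t2 eEFK eEFK))

def R10 : TP2 ℂ Q :=
  (2:ℂ)⁻¹ • ((t2 1 1 + t2 1 gK - Complex.I • t2 gK 1 + Complex.I • t2 gK gK) *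
    (t2 1 gK + (1 - Complex.I) • t2 eFK gE + (1 - Complex.I) • t2 gE eFK
      - (1 - Complex.I) • t2 1 eEF - (2 * Complex.I) • t2 eEFK eEF))

def R11 (β : ℂ) : TP2 ℂ Q :=
  (β / 2) • ((t2 1 1 - Complex.I • t2 1 gK - Complex.I • t2 gK 1 + t2 gK gK) *
    ((-Complex.I) • t2 gK 1 + (2 * Complex.I) • t2 eEK gF + (1 - Complex.I) • t2 gK eEFK
      - (1 + Complex.I) • t2 eEF 1 - (2 * Complex.I) • t2 eEF eEFK))

/-- The universal R-matrix `R` of the quasi-triangular quasi-Hopf structure on `Q`. -/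
def Rmat (β : ℂ) : TP2 ℂ Q :=
  R00 * t2 e0 e0 + R01 * t2 e0 e1 + R10 * t2 e1 e0 + R11 β * t2 e1 e1

/-- The standard R-matrix `R_st` of the quotient `Q/(K²-1)`. -/
def Rst : TP2 ℂ Q :=
  (2:ℂ)⁻¹ • ∑ m ∈ Finset.range 2, ∑ n ∈ Finset.range 2,
    ((-1:ℂ) ^ (m * n)) • (t2 (gK ^ m) (gK ^ n) * (t2 1 1 + (2 * Complex.I) • t2 gE gF))

/-- The monodromy matrix `M = R₂₁ · R`. -/
def Mmat (β : ℂ) : TP2 ℂ Q := flipA ℂ Q (Rmat β) * Rmat β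

/-- The ribbon element `v = (e₀ − iβ K e₁)(1 − 2 f⁺ f⁻)`. -/
def vRib (β : ℂ) : Q := (e0 - (Complex.I * β) • (gK * e1)) * (1 - (2:ℂ) • (fp * fm))

/-- The coevaluation element `β = e₀ − 2iβ² C e₁`. -/
def bbEl (β : ℂ) : Q := e0 - (2 * Complex.I * β ^ 2) • (Cas * e1)

/-- `b ⊗ c ↦ S(b · bb · S(c))`, inner part of the Drinfeld element. -/
def uInner (S : Q →ₗ[ℂ] Q) (bb : Q) : TP2 ℂ Q →ₗ[ℂ] Q :=
  S ∘ₗ mulA ℂ Q ∘ₗ TensorProduct.map (LinearMap.mulRight ℂ bb) S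

/-- `Φ' ⊗ Φ'' ⊗ Φ''' ↦ S(Φ'' · bb · S(Φ''')) ⊗ Φ'`. -/
def uMap1 (S : Q →ₗ[ℂ] Q) (bb : Q) : TP3 ℂ Q →ₗ[ℂ] TP2 ℂ Q :=
  TensorProduct.map (uInner S bb) LinearMap.id ∘ₗ (TensorProduct.comm ℂ Q (TP2 ℂ Q)).toLinearMap

/-- `R' ⊗ R'' ↦ S(R'') · al · R'`. -/
def uMap2 (S : Q →ₗ[ℂ] Q) (al : Q) : TP2 ℂ Q →ₗ[ℂ] Q :=
  mulA ℂ Q ∘ₗ TensorProduct.map (LinearMap.mulRight ℂ al ∘ₗ S) LinearMap.id ∘ₗ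
    (TensorProduct.comm ℂ Q Q).toLinearMap

/-- `(x ⊗ a) ⊗ (R' ⊗ R'') ↦ x · (S(R'') · al · R') · a`. -/
def uBig (S : Q →ₗ[ℂ] Q) (al : Q) : TP2 ℂ Q ⊗[ℂ] TP2 ℂ Q →ₗ[ℂ] Q :=
  mulA ℂ Q ∘ₗ TensorProduct.map LinearMap.id (mulA ℂ Q ∘ₗ (TensorProduct.comm ℂ Q Q).toLinearMap)
    ∘ₗ (TensorProduct.assoc ℂ Q Q Q).toLinearMap ∘ₗ TensorProduct.map LinearMap.id (uMap2 S al)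

/-- The Drinfeld element `u = Σ S(Φ''·b·S(Φ'''))·S(R'')·α·R'·Φ'` (with `α = 1`). -/
def uDrin (β : ℂ) (S : Q →ₗ[ℂ] Q) : Q :=
  uBig S 1 (uMap1 S (bbEl β) (Phi β) ⊗ₜ[ℂ] Rmat β)

/-- The balancing element `g = b · S(α) · v⁻¹ · u` (with `α = 1`). -/
def balG (β : ℂ) (S : Q →ₗ[ℂ] Q) : Q :=
  bbEl β * S 1 * Ring.inverse (vRib β) * uDrin β S

/-- The cointegral `c = (β²/i)·E·F·(1 + K + K² + K³)`. -/
def cInt (β : ℂ) : Q := (β ^ 2 / Complex.I) • (gE * gF * (1 + gK + gK ^ 2 + gK ^ 3))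

/-- The q-trace of a one-dimensional representation, with balancing element `K⁻¹`. -/
def qTr1 (ρ : Q →ₐ[ℂ] ℂ) : Q →ₗ[ℂ] ℂ := ρ.toLinearMap ∘ₗ LinearMap.mulLeft ℂ gK

/-- The q-trace of a two-dimensional (matrix) representation, with balancing element `K⁻¹`. -/
def qTrM (ρ : Q →ₐ[ℂ] Matrix (Fin 2) (Fin 2) ℂ) : Q →ₗ[ℂ] ℂ :=
  Matrix.traceLinearMap (Fin 2) ℂ ℂ ∘ₗ ρ.toLinearMap ∘ₗ LinearMap.mulLeft ℂ gK

/-- The Drinfeld mapping `φ ↦ (φ ⊗ id)(M)`. -/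
def drinfeldImg (β : ℂ) (φ : Q →ₗ[ℂ] ℂ) : Q :=
  (TensorProduct.lid ℂ Q) (TensorProduct.map φ LinearMap.id (Mmat β))


/-! ### A small calculus of formal linear combinations with Gaussian integer coefficients -/

namespace QCalc

/-- Formal linear combinations. -/
abbrev FL (X : Type) : Type := List (X × GaussianInt)

/-- Evaluation of a formal linear combination. -/
def lin {X M : Type} [AddCommGroup M] [Module ℂ M] (f : X → M) : FL X → M
  | [] => 0
  | t :: l => GaussianInt.toComplex t.2 • f t.1 + lin f l

/-- Scaling. -/
def scl {X : Type} (c : GaussianInt) : FL X → FL X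
  | [] => []
  | t :: l => (t.1, c * t.2) :: scl c l

/-- Linear extension. -/
def lbind {X Y : Type} (h : X → FL Y) : FL X → FL Y
  | [] => []
  | t :: l => scl t.2 (h t.1) ++ lbind h l

/-- Bilinear extension. -/
def bil {X Y Z : Type} (h : X → Y → FL Z) (l : FL X) (l' : FL Y) : FL Z :=
  lbind (fun x => lbind (h x) l') l

/-- Insertion with merging. -/
def ins {X : Type} [DecidableEq X] (t : X × GaussianInt) : FL X → FL X
  | [] => [t]
  | u :: l => if u.1 = t.1 then (u.1, u.2 + t.2) :: l else u :: ins t l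

/-- Collecting like terms. -/
def collect {X : Type} [DecidableEq X] : FL X → FL X
  | [] => []
  | t :: l => ins t (collect l)

/-- Removing zero coefficients. -/
def prune {X : Type} : FL X → FL X
  | [] => []
  | t :: l => if t.2 = 0 then prune l else t :: prune l

section
variable {X Y Z M N P : Type} [AddCommGroup M] [Module ℂ M] [AddCommGroup N] [Module ℂ N]
  [AddCommGroup P] [Module ℂ P]

theorem lin_append (f : X → M) (l l' : FL X) : lin f (l ++ l') = lin f l + lin f l' := by
  induction l with
  | nil => simp [lin]
  | cons t l ih => simp [lin, ih, add_assoc]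

theorem lin_scl (f : X → M) (c : GaussianInt) (l : FL X) :
    lin f (scl c l) = GaussianInt.toComplex c • lin f l := by
  induction l with
  | nil => simp [lin, scl]
  | cons t l ih => simp [lin, scl, ih, smul_smul]

theorem lin_lbind (L : M →ₗ[ℂ] N) (f : X → M) (g : Y → N) (h : X → FL Y)
    (H : ∀ x, lin g (h x) = L (f x)) (l : FL X) : lin g (lbind h l) = L (lin f l) := by
  induction l with
  | nil => simp [lin, lbind]
  | cons t l ih => simp [lin, lbind, lin_append, lin_scl, ih, H]

theorem lin_bil (B : M →ₗ[ℂ] N →ₗ[ℂ] P) (f : X → M) (g : Y → N) (k : Z → P)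
    (h : X → Y → FL Z) (H : ∀ x y, lin k (h x y) = B (f x) (g y)) (l : FL X) (l' : FL Y) :
    lin k (bil h l l') = B (lin f l) (lin g l') := by
  have := lin_lbind (B.flip (lin g l')) f k (fun x => lbind (h x) l')
    (fun x => by simpa using lin_lbind (B (f x)) g k (h x) (H x) l') l
  simpa [bil] using this

theorem lin_ins [DecidableEq X] (f : X → M) (t : X × GaussianInt) (l : FL X) :
    lin f (ins t l) = GaussianInt.toComplex t.2 • f t.1 + lin f l := by
  induction l with
  | nil => simp [lin, ins]
  | cons u l ih =>
    unfold ins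
    split_ifs with hu
    · simp only [lin, map_add, add_smul, hu]; abel
    · simp only [lin, ih]; abel

theorem lin_collect [DecidableEq X] (f : X → M) (l : FL X) : lin f (collect l) = lin f l := by
  induction l with
  | nil => rfl
  | cons t l ih => simp [lin, collect, lin_ins, ih]

theorem lin_prune (f : X → M) (l : FL X) : lin f (prune l) = lin f l := by
  induction l with
  | nil => rfl
  | cons t l ih =>
    unfold prune
    split_ifs with ht
    · simp [lin, ih, ht]
    · simp [lin, ih]

/-- Equality test by computation. -/
theorem lin_eq_of_prune [DecidableEq X] (f : X → M) (l l' : FL X)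
    (h : prune (collect l) = l') : lin f l = lin f l' := by
  rw [← h, lin_prune, lin_collect]

end

/-- Monomials `E^a F^b K^c` with `a, b, c ∈ {0,1}`. -/
abbrev Mon : Type := Bool × Bool × Bool

abbrev m1 : Mon := (false, false, false)
abbrev mE : Mon := (true, false, false)
abbrev mF : Mon := (false, true, false)
abbrev mK : Mon := (false, false, true)
abbrev mEF : Mon := (true, true, false)
abbrev mEK : Mon := (true, false, true)
abbrev mFK : Mon := (false, true, true)
abbrev mEFK : Mon := (true, true, true)

/-- A copy of the sector `Q e₀` (`n = false`) or `Q e₁` (`n = true`) in an algebra. -/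
structure Sec (A : Type) [Ring A] [Algebra ℂ A] (n : Bool) where
  E : A
  F : A
  K : A
  e : A
  ee : e * e = e
  eE : e * E = E
  Ee : E * e = E
  eF : e * F = F
  Fe : F * e = F
  eK : e * K = K
  Ke : K * e = K
  EE : E * E = 0
  FF : F * F = 0
  KK : K * K = cond n (-e) e
  KE : K * E = -(E * K)
  KF : K * F = -(F * K)
  FE : F * E = E * F + cond n (Complex.I • K) 0

/-- The basis element attached to a monomial. -/
def Sec.bas {A : Type} [Ring A] [Algebra ℂ A] {n : Bool} (s : Sec A n) (m : Mon) : A :=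
  cond m.1 s.E s.e * (cond m.2.1 s.F s.e * cond m.2.2 s.K s.e)

/-- Sign `(-1)^b`. -/
def sg (b : Bool) : GaussianInt := cond b (-1) 1

/-- Multiplication table of a sector. -/
def mulB (n : Bool) (x y : Mon) : FL Mon :=
  match x, y with
  | (a, b, c), (d, e, f) =>
    (if (a && d) || (b && e) then []
      else [((a || d, b || e, xor c f), sg (c && xor d e) * sg (n && (c && f)))]) ++
    (if b && d && n then
      [((a, e, !(xor c f)), sg (c && xor d e) * sg e * ⟨0, 1⟩ * sg (c || f))] else [])

theorem Sec.mul_bas {A : Type} [Ring A] [Algebra ℂ A] {n : Bool} (s : Sec A n) (x y : Mon) :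
    lin s.bas (mulB n x y) = s.bas x * s.bas y := by
  have h1 : ∀ z, s.e * (s.E * z) = s.E * z := fun z => by rw [← mul_assoc, s.eE]
  have h2 : ∀ z, s.e * (s.F * z) = s.F * z := fun z => by rw [← mul_assoc, s.eF]
  have h3 : ∀ z, s.e * (s.K * z) = s.K * z := fun z => by rw [← mul_assoc, s.eK]
  have h4 : ∀ z, s.E * (s.E * z) = 0 := fun z => by rw [← mul_assoc, s.EE, zero_mul]
  have h5 : ∀ z, s.F * (s.F * z) = 0 := fun z => by rw [← mul_assoc, s.FF, zero_mul]
  have h6 : ∀ z, s.K * (s.K * z) = cond n (-s.e) s.e * z := fun z => by rw [← mul_assoc, s.KK]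
  have h7 : ∀ z, s.K * (s.E * z) = -(s.E * (s.K * z)) := fun z => by
    rw [← mul_assoc, s.KE, neg_mul, mul_assoc]
  have h8 : ∀ z, s.K * (s.F * z) = -(s.F * (s.K * z)) := fun z => by
    rw [← mul_assoc, s.KF, neg_mul, mul_assoc]
  have h9 : ∀ z, s.F * (s.E * z) = s.E * (s.F * z) + cond n (Complex.I • s.K) 0 * z := fun z => by
    rw [← mul_assoc, s.FE, add_mul, mul_assoc]
  have hI : GaussianInt.toComplex ⟨0, 1⟩ = Complex.I := by simp [GaussianInt.toComplex_def']
  have hE := s.eE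
  have hE' := s.Ee
  have hF := s.eF
  have hF' := s.Fe
  have hK := s.eK
  have hK' := s.Ke
  have hKK := s.KK
  have hKE := s.KE
  have hKF := s.KF
  have hFE := s.FE
  obtain ⟨a, b, c⟩ := x
  obtain ⟨d, e, f⟩ := y
  cases n <;> cases a <;> cases b <;> cases c <;> cases d <;> cases e <;> cases f <;>
  simp [lin, mulB, Sec.bas, sg, mul_assoc, h1, h2, h3, h4, h5, h6, h7, h8, h9, hE, hE', hF, hF',
    hK, hK', hKK, hKE, hKF, hFE, s.ee, s.EE, s.FF, hI, mul_add, add_mul] <;> abel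

end QCalc

/-! ### The relations of `Q` in an abstract algebra, and the two sectors -/

namespace QCalc

/-- Elements of an algebra satisfying the defining relations of `Q`. -/
structure QD (A : Type) [Ring A] [Algebra ℂ A] where
  E : A
  F : A
  K : A
  Ki : A
  KKi : K * Ki = 1
  KiK : Ki * K = 1
  KEKi : K * E * Ki = -E
  KFKi : K * F * Ki = -F
  EF : E * F - F * E = (2 * Complex.I)⁻¹ • (K - Ki)
  E2 : E ^ 2 = 0
  F2 : F ^ 2 = 0
  K4 : K ^ 4 = 1

section
variable {A : Type} [Ring A] [Algebra ℂ A] (q : QD A)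

theorem QD.rE : q.E * q.E = 0 := by rw [← pow_two, q.E2]
theorem QD.rF : q.F * q.F = 0 := by rw [← pow_two, q.F2]

theorem QD.rKi : q.Ki = q.K ^ 3 := by
  calc q.Ki = q.K ^ 4 * q.Ki := by rw [q.K4, one_mul]
    _ = q.K ^ 3 * (q.K * q.Ki) := by rw [pow_succ, mul_assoc]
    _ = q.K ^ 3 := by rw [q.KKi, mul_one]

theorem QD.KE : q.K * q.E = -(q.E * q.K) := by
  calc q.K * q.E = q.K * q.E * q.Ki * q.K := by rw [mul_assoc _ q.Ki, q.KiK, mul_one]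
    _ = -(q.E * q.K) := by rw [q.KEKi, neg_mul]

theorem QD.KF : q.K * q.F = -(q.F * q.K) := by
  calc q.K * q.F = q.K * q.F * q.Ki * q.K := by rw [mul_assoc _ q.Ki, q.KiK, mul_one]
    _ = -(q.F * q.K) := by rw [q.KFKi, neg_mul]

theorem QD.K2E : q.K ^ 2 * q.E = q.E * q.K ^ 2 := by
  rw [pow_two, mul_assoc, q.KE, mul_neg, ← mul_assoc, q.KE, neg_mul, neg_neg, mul_assoc]

theorem QD.K2F : q.K ^ 2 * q.F = q.F * q.K ^ 2 := by
  rw [pow_two, mul_assoc, q.KF, mul_neg, ← mul_assoc, q.KF, neg_mul, neg_neg, mul_assoc]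

theorem QD.FE : q.F * q.E = q.E * q.F + (Complex.I / 2) • (q.K - q.K ^ 3) := by
  have h := q.EF
  have h2 : (2 * Complex.I)⁻¹ = -(Complex.I / 2) := by
    rw [mul_inv, Complex.inv_I]; ring
  rw [h2, q.rKi, neg_smul] at h
  rw [← neg_eq_iff_eq_neg.mpr h]
  abel

/-- The central idempotents. -/
def QD.e (n : Bool) : A := (2:ℂ)⁻¹ • (cond n (1 - q.K ^ 2) (1 + q.K ^ 2))

theorem QD.e_eq (n : Bool) : q.e n = (2:ℂ)⁻¹ • (1 + cond n (-1 : ℂ) 1 • q.K ^ 2) := by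
  cases n <;> simp [QD.e, sub_eq_add_neg]

theorem QD.eE_comm (n : Bool) : q.e n * q.E = q.E * q.e n := by
  simp [q.e_eq, add_mul, mul_add, q.K2E]
theorem QD.eF_comm (n : Bool) : q.e n * q.F = q.F * q.e n := by
  simp [q.e_eq, add_mul, mul_add, q.K2F]
theorem QD.eK_comm (n : Bool) : q.e n * q.K = q.K * q.e n := by
  simp [q.e_eq, add_mul, mul_add, ← pow_succ, ← pow_succ']

theorem QD.K2e (n : Bool) : q.K ^ 2 * q.e n = cond n (-q.e n) (q.e n) := by
  have h : q.K ^ 2 * q.K ^ 2 = 1 := by rw [← pow_add, q.K4]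
  cases n
  · simp only [q.e_eq, cond_false, mul_smul_comm, mul_add, h, one_smul, mul_one]
    rw [add_comm]
  · simp only [q.e_eq, cond_true, mul_smul_comm, mul_add, h, mul_one]
    module

theorem QD.ee_mul (n n' : Bool) : q.e n * q.e n' = if n = n' then q.e n else 0 := by
  have : q.e n * q.e n' = (2:ℂ)⁻¹ • (q.e n' + cond n (-1 : ℂ) 1 • (q.K ^ 2 * q.e n')) := by
    rw [q.e_eq n, smul_mul_assoc, add_mul, one_mul, smul_mul_assoc]
  rw [this, q.K2e]
  cases n <;> cases n' <;> simp <;> module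

theorem QD.e_sum : q.e false + q.e true = 1 := by
  simp only [q.e_eq, cond_true, cond_false]; module

theorem QD.ee_self (n : Bool) : q.e n * q.e n = q.e n := by simp [q.ee_mul]

/-- Products of elements commuting with the idempotent. -/
theorem QD.corner (n : Bool) {x y : A} (hy : q.e n * y = y * q.e n) :
    (x * q.e n) * (y * q.e n) = x * y * q.e n := by
  rw [mul_assoc x, ← mul_assoc (q.e n), hy, mul_assoc y, q.ee_self, mul_assoc]

/-- The sectors. -/
def QD.sec (n : Bool) : Sec A n where
  E := q.E * q.e n
  F := q.F * q.e n
  K := q.K * q.e n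
  e := q.e n
  ee := q.ee_self n
  eE := by rw [← mul_assoc, q.eE_comm, mul_assoc, q.ee_self]
  Ee := by rw [mul_assoc, q.ee_self]
  eF := by rw [← mul_assoc, q.eF_comm, mul_assoc, q.ee_self]
  Fe := by rw [mul_assoc, q.ee_self]
  eK := by rw [← mul_assoc, q.eK_comm, mul_assoc, q.ee_self]
  Ke := by rw [mul_assoc, q.ee_self]
  EE := by rw [q.corner n (q.eE_comm n), q.rE, zero_mul]
  FF := by rw [q.corner n (q.eF_comm n), q.rF, zero_mul]
  KK := by rw [q.corner n (q.eK_comm n), ← pow_two, q.K2e]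
  KE := by rw [q.corner n (q.eE_comm n), q.corner n (q.eK_comm n), q.KE, neg_mul]
  KF := by rw [q.corner n (q.eF_comm n), q.corner n (q.eK_comm n), q.KF, neg_mul]
  FE := by
    rw [q.corner n (q.eF_comm n), q.corner n (q.eE_comm n), q.FE, add_mul, smul_mul_assoc, sub_mul,
      pow_succ' q.K 2, mul_assoc q.K, q.K2e]
    cases n
    · simp
    · simp only [cond_true, mul_neg]; module

/-- The basis of the sector. -/
abbrev QD.b (n : Bool) (m : Mon) : A := (q.sec n).bas m

theorem QD.b_eq (n : Bool) (m : Mon) :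
    q.b n m = cond m.1 q.E 1 * cond m.2.1 q.F 1 * cond m.2.2 q.K 1 * q.e n := by
  obtain ⟨a, b, c⟩ := m
  have hF := q.corner n (x := q.E) (q.eF_comm n)
  have hK := q.corner n (x := q.E) (q.eK_comm n)
  have hK' := q.corner n (x := q.F) (q.eK_comm n)
  have hK2 := q.corner n (x := q.E * q.F) (q.eK_comm n)
  have h1 := (q.sec n).ee
  have h2 := (q.sec n).eE
  have h3 := (q.sec n).eF
  have h4 := (q.sec n).eK
  have h5 := (q.sec n).Ee
  have h6 := (q.sec n).Fe
  have h7 := (q.sec n).Ke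
  simp only [QD.b, Sec.bas]
  cases a <;> cases b <;> cases c <;>
    simp only [cond_true, cond_false, h1, h3, h4, h5, h6, one_mul, mul_one]
  · rfl
  · rfl
  · rfl
  · rw [← mul_assoc, h3]; exact hK'
  · rfl
  · exact hK
  · exact hF
  · rw [← mul_assoc, ← hK2, ← hF]; rfl

theorem QD.b_orth {n n' : Bool} (h : n ≠ n') (m m' : Mon) : q.b n m * q.b n' m' = 0 := by
  have h1 : q.b n m = q.b n m * q.e n := by rw [q.b_eq, mul_assoc _ (q.e n), q.ee_self]
  have h2 : q.e n' * q.b n' m' = q.b n' m' := by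
    have h1 := (q.sec n').ee
    have h2 := (q.sec n').eE
    change (q.sec n').e * _ = _
    simp only [QD.b, Sec.bas]
    cases m'.1 <;> simp [← mul_assoc, h1, h2]
  rw [h1, ← h2, mul_assoc, ← mul_assoc (q.e n), q.ee_mul, if_neg h, zero_mul, mul_zero]

/-! ### Triple tensor products -/

abbrev Mon3 : Type := Mon × Mon × Mon

abbrev Sgn3 : Type := Bool × Bool × Bool

/-- Pure triple tensors. -/
def tt (a b c : A) : TP3 ℂ A := a ⊗ₜ[ℂ] (b ⊗ₜ[ℂ] c)

/-- Basis of a sector of the triple tensor product. -/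
def QD.b3 (n : Sgn3) (m : Mon3) : TP3 ℂ A := tt (q.b n.1 m.1) (q.b n.2.1 m.2.1) (q.b n.2.2 m.2.2)

def pairT {X Y : Type} (x : X) (y : Y) : FL (X × Y) := [((x, y), 1)]

def mul3 (n : Sgn3) (x y : Mon3) : FL Mon3 :=
  bil pairT (mulB n.1 x.1 y.1) (bil pairT (mulB n.2.1 x.2.1 y.2.1) (mulB n.2.2 x.2.2 y.2.2))

theorem tt_mul (a b c a' b' c' : A) : tt a b c * tt a' b' c' = tt (a * a') (b * b') (c * c') := by
  simp only [tt, Algebra.TensorProduct.tmul_mul_tmul]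

theorem mul3_b3 (n : Sgn3) (x y : Mon3) : lin (q.b3 n) (mul3 n x y) = q.b3 n x * q.b3 n y := by
  have h1 := lin_bil (TensorProduct.mk ℂ A A) (q.b n.2.1) (q.b n.2.2)
    (fun m => q.b n.2.1 m.1 ⊗ₜ[ℂ] q.b n.2.2 m.2) pairT (fun x y => by simp [pairT, lin])
    (mulB n.2.1 x.2.1 y.2.1) (mulB n.2.2 x.2.2 y.2.2)
  have h2 := lin_bil (TensorProduct.mk ℂ A (TP2 ℂ A)) (q.b n.1)
    (fun m => q.b n.2.1 m.1 ⊗ₜ[ℂ] q.b n.2.2 m.2) (q.b3 n) pairT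
    (fun x y => by simp [pairT, lin, QD.b3, tt])
    (mulB n.1 x.1 y.1) (bil pairT (mulB n.2.1 x.2.1 y.2.1) (mulB n.2.2 x.2.2 y.2.2))
  rw [mul3, h2, h1, Sec.mul_bas, Sec.mul_bas, Sec.mul_bas, QD.b3, QD.b3, tt_mul]
  rfl

/-- Evaluation in a sector. -/
def QD.ev (n : Sgn3) (l : FL Mon3) : TP3 ℂ A := lin (q.b3 n) l

theorem ev_mul (n : Sgn3) (l l' r : FL Mon3) (h : prune (collect (bil (mul3 n) l l')) = r) :
    q.ev n l * q.ev n l' = q.ev n r := by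
  have := lin_bil (LinearMap.mul ℂ (TP3 ℂ A)) (q.b3 n) (q.b3 n) (q.b3 n) (mul3 n)
    (fun x y => by rw [mul3_b3]; rfl) l l'
  rw [lin_eq_of_prune _ _ r h] at this
  exact this.symm

theorem ev_orth {n n' : Sgn3} (h : n ≠ n') (l l' : FL Mon3) : q.ev n l * q.ev n' l' = 0 := by
  have H : ∀ x y, q.b3 n x * q.b3 n' y = 0 := by
    intro x y
    rw [QD.b3, QD.b3, tt_mul]
    obtain ⟨n1, n2, n3⟩ := n
    obtain ⟨k1, k2, k3⟩ := n'
    by_cases h1 : n1 = k1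
    · by_cases h2 : n2 = k2
      · have h3 : n3 ≠ k3 := fun h3 => h (by rw [h1, h2, h3])
        simp [q.b_orth h3, tt]
      · simp [q.b_orth h2, tt]
    · simp [q.b_orth h1, tt]
  have hb := lin_bil (LinearMap.mul ℂ (TP3 ℂ A)) (q.b3 n) (q.b3 n') (q.b3 n) (fun _ _ => [])
    (fun x y => by simp [lin, H]) l l'
  have h0 : bil (fun _ _ => []) l l' = ([] : FL Mon3) := by
    have h1 : ∀ l : FL Mon3, lbind (fun _ => []) l = ([] : FL Mon3) := by
      intro l
      induction l with
      | nil => rfl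
      | cons t l ih => simp [lbind, ih, scl]
    simp only [bil, h1]
  rw [h0] at hb
  exact hb.symm

end

end QCalc

/-! ### The coassociator and its inverse -/

namespace QCalc

section
variable {A : Type} [Ring A] [Algebra ℂ A] (q : QD A)

/-- Abstract copy of `Φ^{010}`. -/
def QD.P010 : TP3 ℂ A :=
  tt 1 1 1 - (1 + Complex.I) • tt q.E q.K q.F + (1 - Complex.I) • tt (q.F * q.K) q.K (q.E * q.K)
    + (2:ℂ) • tt (q.E * q.F * q.K) 1 (q.E * q.F * q.K)

/-- Abstract copy of `Φ^{101}`. -/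
def QD.P101 : TP3 ℂ A :=
  (Complex.I - 1) • tt 1 q.F (q.E * q.K) + tt 1 q.K 1
    + (2:ℂ) • tt 1 (q.E * q.F) (q.E * q.F * q.K)
    - (1 + Complex.I) • tt 1 (q.E * q.K) q.F - (1 + Complex.I) • tt q.E (q.F * q.K) 1
    + (2 * Complex.I) • tt q.E (q.E * q.F * q.K) q.F + (1 - Complex.I) • tt (q.F * q.K) q.E 1
    - (2 * Complex.I) • tt (q.F * q.K) (q.E * q.F * q.K) (q.E * q.K)
    - (2:ℂ) • tt (q.E * q.F * q.K) (q.E * q.F) 1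

/-- Abstract copy of `Φ^{111}`. -/
def QD.P111 (β : ℂ) : TP3 ℂ A :=
  (Complex.I * β ^ 2) • (
    (1 + Complex.I) • tt 1 q.F (q.E * q.K) - tt 1 q.K 1 - (2:ℂ) • tt 1 (q.E * q.F) 1
      - (2 * Complex.I) • tt 1 (q.E * q.F) (q.E * q.F * q.K)
      + (1 + Complex.I) • tt 1 (q.E * q.K) q.F
      - (1 + Complex.I) • tt q.E 1 q.F + (1 + Complex.I) • tt q.E (q.F * q.K) 1
      + (2 * Complex.I) • tt q.E (q.F * q.K) (q.E * q.F * q.K)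
      + (2:ℂ) • tt q.E (q.E * q.F * q.K) q.F
      - (1 + Complex.I) • tt (q.F * q.K) 1 (q.E * q.K)
      + (1 + Complex.I) • tt (q.F * q.K) q.E 1
      + (2 * Complex.I) • tt (q.F * q.K) q.E (q.E * q.F * q.K)
      + (2:ℂ) • tt (q.F * q.K) (q.E * q.F * q.K) (q.E * q.K)
      + (2 * Complex.I) • tt (q.E * q.F * q.K) q.F (q.E * q.K)
      + (2 * Complex.I) • tt (q.E * q.F * q.K) q.K (q.E * q.F * q.K)
      - (2 * Complex.I) • tt (q.E * q.F * q.K) (q.E * q.F) 1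
      + (2 * Complex.I) • tt (q.E * q.F * q.K) (q.E * q.K) q.F
      + (4:ℂ) • tt (q.E * q.F * q.K) (q.E * q.F) (q.E * q.F * q.K))

/-- Abstract copy of `Φ`. -/
def QD.Phi (β : ℂ) : TP3 ℂ A :=
  tt (q.e false) (q.e false) (q.e false) + tt (q.e true) (q.e false) (q.e false)
    + q.P010 * tt (q.e false) (q.e true) (q.e false) + tt (q.e false) (q.e false) (q.e true)
    + tt (q.e true) (q.e true) (q.e false) + q.P101 * tt (q.e true) (q.e false) (q.e true)
    + tt (q.e false) (q.e true) (q.e true) + q.P111 β * tt (q.e true) (q.e true) (q.e true)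

/-- Lists of coefficients. -/
def LU : FL Mon3 := [((m1, m1, m1), 1)]

def L010 : FL Mon3 := [((m1, m1, m1), ⟨1, 0⟩), ((mE, mK, mF), ⟨-1, -1⟩),
  ((mFK, mK, mEK), ⟨1, -1⟩), ((mEFK, m1, mEFK), ⟨2, 0⟩)]

def M010 : FL Mon3 := [((m1, m1, m1), ⟨1, 0⟩), ((mE, mK, mF), ⟨1, 1⟩),
  ((mFK, mK, mEK), ⟨-1, 1⟩), ((mEFK, m1, mEFK), ⟨2, 0⟩)]

def L101 : FL Mon3 := [((m1, mF, mEK), ⟨-1, 1⟩), ((m1, mK, m1), ⟨1, 0⟩),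
  ((m1, mEF, mEFK), ⟨2, 0⟩), ((m1, mEK, mF), ⟨-1, -1⟩), ((mE, mFK, m1), ⟨-1, -1⟩),
  ((mE, mEFK, mF), ⟨0, 2⟩), ((mFK, mE, m1), ⟨1, -1⟩), ((mFK, mEFK, mEK), ⟨0, -2⟩),
  ((mEFK, mEF, m1), ⟨-2, 0⟩)]

def L111 : FL Mon3 := [((m1, mF, mEK), ⟨1, 1⟩), ((m1, mK, m1), ⟨-1, 0⟩),
  ((m1, mEF, m1), ⟨-2, 0⟩), ((m1, mEF, mEFK), ⟨0, -2⟩), ((m1, mEK, mF), ⟨1, 1⟩),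
  ((mE, m1, mF), ⟨-1, -1⟩), ((mE, mFK, m1), ⟨1, 1⟩), ((mE, mFK, mEFK), ⟨0, 2⟩),
  ((mE, mEFK, mF), ⟨2, 0⟩), ((mFK, m1, mEK), ⟨-1, -1⟩), ((mFK, mE, m1), ⟨1, 1⟩),
  ((mFK, mE, mEFK), ⟨0, 2⟩), ((mFK, mEFK, mEK), ⟨2, 0⟩), ((mEFK, mF, mEK), ⟨0, 2⟩),
  ((mEFK, mK, mEFK), ⟨0, 2⟩), ((mEFK, mEF, m1), ⟨0, -2⟩), ((mEFK, mEK, mF), ⟨0, 2⟩),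
  ((mEFK, mEF, mEFK), ⟨4, 0⟩)]

def M111 : FL Mon3 := [((m1, mF, mEK), ⟨1, -1⟩), ((m1, mEF, mEFK), ⟨0, -2⟩),
  ((mE, mFK, mEFK), ⟨0, 2⟩), ((mFK, mEFK, mEK), ⟨-2, 0⟩), ((mFK, m1, mEK), ⟨-1, 1⟩),
  ((mEFK, mF, mEK), ⟨0, 2⟩), ((mEFK, mK, mEFK), ⟨0, 2⟩), ((m1, mK, m1), ⟨1, 0⟩),
  ((m1, mEF, m1), ⟨-2, 0⟩), ((mE, m1, mF), ⟨-1, 1⟩), ((mE, mFK, m1), ⟨1, -1⟩),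
  ((mE, mEFK, mF), ⟨-2, 0⟩), ((mFK, mE, m1), ⟨1, -1⟩), ((mFK, mE, mEFK), ⟨0, 2⟩),
  ((mEFK, mEF, m1), ⟨0, -2⟩), ((m1, mEK, mF), ⟨1, -1⟩), ((mEFK, mEK, mF), ⟨0, 2⟩),
  ((mEFK, mEF, mEFK), ⟨4, 0⟩)]

theorem ev_LU (n1 n2 n3 : Bool) : q.ev (n1, n2, n3) LU = tt (q.e n1) (q.e n2) (q.e n3) := by
  simp [QD.ev, LU, lin, QD.b3, q.b_eq]

theorem ev_L010 : q.P010 * tt (q.e false) (q.e true) (q.e false) = q.ev (false, true, false) L010 := by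
  simp only [QD.ev, L010, lin, QD.b3, q.b_eq, QD.P010, add_mul, sub_mul, smul_mul_assoc, tt_mul,
    GaussianInt.toComplex_def', cond_true, cond_false, one_mul, mul_one]
  push_cast
  module

theorem ev_L101 : q.P101 * tt (q.e true) (q.e false) (q.e true) = q.ev (true, false, true) L101 := by
  simp only [QD.ev, L101, lin, QD.b3, q.b_eq, QD.P101, add_mul, sub_mul, smul_mul_assoc, tt_mul,
    GaussianInt.toComplex_def', cond_true, cond_false, one_mul, mul_one]
  push_cast
  module

theorem ev_L111 (β : ℂ) : q.P111 β * tt (q.e true) (q.e true) (q.e true) =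
    (Complex.I * β ^ 2) • q.ev (true, true, true) L111 := by
  have c1 : GaussianInt.toComplex ⟨1, 1⟩ = 1 + Complex.I := by simp [GaussianInt.toComplex_def']
  have c2 : GaussianInt.toComplex ⟨-1, -1⟩ = -(1 + Complex.I) := by
    rw [GaussianInt.toComplex_def']; push_cast; ring
  have c3 : GaussianInt.toComplex ⟨0, 2⟩ = 2 * Complex.I := by simp [GaussianInt.toComplex_def']
  have c4 : GaussianInt.toComplex ⟨0, -2⟩ = -(2 * Complex.I) := by
    simp [GaussianInt.toComplex_def']
  have c5 : GaussianInt.toComplex ⟨2, 0⟩ = 2 := by simp [GaussianInt.toComplex_def']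
  have c6 : GaussianInt.toComplex ⟨-2, 0⟩ = -2 := by simp [GaussianInt.toComplex_def']
  have c7 : GaussianInt.toComplex ⟨4, 0⟩ = 4 := by simp [GaussianInt.toComplex_def']
  have c8 : GaussianInt.toComplex ⟨-1, 0⟩ = -1 := by simp [GaussianInt.toComplex_def']
  simp only [QD.ev, L111, lin, QD.b3, q.b_eq, QD.P111, add_mul, sub_mul, smul_mul_assoc, tt_mul,
    cond_true, cond_false, one_mul, mul_one, c1, c2, c3, c4, c5, c6, c7, c8, neg_smul, one_smul]
  simp only [sub_eq_add_neg, add_assoc, add_zero]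

theorem Phi_ev (β : ℂ) : q.Phi β =
    q.ev (false, false, false) LU + q.ev (true, false, false) LU + q.ev (false, true, false) L010
    + q.ev (false, false, true) LU + q.ev (true, true, false) LU + q.ev (true, false, true) L101
    + q.ev (false, true, true) LU + (Complex.I * β ^ 2) • q.ev (true, true, true) L111 := by
  rw [QD.Phi, ev_L010, ev_L101, ev_L111]
  simp only [ev_LU]

/-- The inverse of `Φ`. -/
def QD.Psi (β : ℂ) : TP3 ℂ A :=
    q.ev (false, false, false) LU + q.ev (true, false, false) LU + q.ev (false, true, false) M010
    + q.ev (false, false, true) LU + q.ev (true, true, false) LU + q.ev (true, false, true) L101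
    + q.ev (false, true, true) LU + (Complex.I * β ^ 2) • q.ev (true, true, true) M111

theorem sum_LU : q.ev (false, false, false) LU + q.ev (true, false, false) LU
    + q.ev (false, true, false) LU + q.ev (false, false, true) LU + q.ev (true, true, false) LU
    + q.ev (true, false, true) LU + q.ev (false, true, true) LU + q.ev (true, true, true) LU
    = 1 := by
  have h : (1 : TP3 ℂ A) = tt (q.e false + q.e true) (q.e false + q.e true)
      (q.e false + q.e true) := by
    rw [q.e_sum]; rfl
  rw [h]
  simp only [ev_LU, tt, TensorProduct.add_tmul, TensorProduct.tmul_add]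
  abel

theorem ev_LU_sq (n1 n2 n3 : Bool) : q.ev (n1, n2, n3) LU * q.ev (n1, n2, n3) LU
    = q.ev (n1, n2, n3) LU := by
  rw [ev_LU, tt_mul, q.ee_self, q.ee_self, q.ee_self]

theorem L010_M010 : q.ev (false, true, false) L010 * q.ev (false, true, false) M010
    = q.ev (false, true, false) LU := ev_mul q _ _ _ _ (by decide +kernel)
theorem M010_L010 : q.ev (false, true, false) M010 * q.ev (false, true, false) L010
    = q.ev (false, true, false) LU := ev_mul q _ _ _ _ (by decide +kernel)
theorem L101_L101 : q.ev (true, false, true) L101 * q.ev (true, false, true) L101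
    = q.ev (true, false, true) LU := ev_mul q _ _ _ _ (by decide +kernel)
theorem L111_M111 : q.ev (true, true, true) L111 * q.ev (true, true, true) M111
    = q.ev (true, true, true) LU := ev_mul q _ _ _ _ (by decide +kernel)
theorem M111_L111 : q.ev (true, true, true) M111 * q.ev (true, true, true) L111
    = q.ev (true, true, true) LU := ev_mul q _ _ _ _ (by decide +kernel)

theorem beta_sq {β : ℂ} (hβ : β ^ 4 = -1) :
    (Complex.I * β ^ 2) * (Complex.I * β ^ 2) = 1 := by
  linear_combination β ^ 4 * Complex.I_mul_I - hβ

/-- Block-diagonal multiplication. -/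
theorem block {R : Type} [Ring R] (a b c d e f g h a' b' c' d' e' f' g' h' : R)
    (H : ∀ x ∈ [(a, 0), (b, 1), (c, 2), (d, 3), (e, 4), (f, 5), (g, 6), (h, 7)],
      ∀ y ∈ [(a', 0), (b', 1), (c', 2), (d', 3), (e', 4), (f', 5), (g', 6), (h', 7)],
      x.2 ≠ (y.2 : ℕ) → x.1 * y.1 = 0) :
    (a + b + c + d + e + f + g + h) * (a' + b' + c' + d' + e' + f' + g' + h')
      = a * a' + b * b' + c * c' + d * d' + e * e' + f * f' + g * g' + h * h' := by
  simp only [List.forall_mem_cons, List.not_mem_nil, false_imp_iff, implies_true, and_true] at H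
  norm_num at H
  simp only [add_mul, mul_add, H, add_zero, zero_add]

theorem Phi_Psi {β : ℂ} (hβ : β ^ 4 = -1) : q.Phi β * q.Psi β = 1 := by
  rw [Phi_ev, QD.Psi, block, ev_LU_sq, ev_LU_sq, ev_LU_sq, ev_LU_sq, ev_LU_sq, L010_M010,
    L101_L101, smul_mul_assoc, mul_smul_comm, smul_smul, beta_sq hβ, one_smul, L111_M111, sum_LU]
  simp only [List.forall_mem_cons, List.not_mem_nil, false_imp_iff, implies_true, and_true]
  refine ⟨?_, ?_, ?_, ?_, ?_, ?_, ?_, ?_⟩ <;> refine ⟨?_, ?_, ?_, ?_, ?_, ?_, ?_, ?_⟩ <;>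
    intro h <;> first
      | exact absurd rfl h
      | ((try simp only [smul_mul_assoc, mul_smul_comm]); rw [ev_orth q (by decide)]; try simp)

theorem Psi_Phi {β : ℂ} (hβ : β ^ 4 = -1) : q.Psi β * q.Phi β = 1 := by
  rw [Phi_ev, QD.Psi, block, ev_LU_sq, ev_LU_sq, ev_LU_sq, ev_LU_sq, ev_LU_sq, M010_L010,
    L101_L101, smul_mul_assoc, mul_smul_comm, smul_smul, beta_sq hβ, one_smul, M111_L111, sum_LU]
  simp only [List.forall_mem_cons, List.not_mem_nil, false_imp_iff, implies_true, and_true]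
  refine ⟨?_, ?_, ?_, ?_, ?_, ?_, ?_, ?_⟩ <;> refine ⟨?_, ?_, ?_, ?_, ?_, ?_, ?_, ?_⟩ <;>
    intro h <;> first
      | exact absurd rfl h
      | ((try simp only [smul_mul_assoc, mul_smul_comm]); rw [ev_orth q (by decide)]; try simp)

theorem inverse_Phi {β : ℂ} (hβ : β ^ 4 = -1) : Ring.inverse (q.Phi β) = q.Psi β :=
  Ring.inverse_unit (⟨q.Phi β, q.Psi β, Phi_Psi q hβ, Psi_Phi q hβ⟩ : (TP3 ℂ A)ˣ)

end

end QCalc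

/-! ### The antipode axioms in the abstract algebra -/

namespace QCalc

section
variable {X M N Y : Type} [AddCommGroup M] [Module ℂ M] [AddCommGroup N] [Module ℂ N]

theorem lin_lbind_smul (c : ℂ) (L : M →ₗ[ℂ] N) (f : X → M) (g : Y → N) (h : X → FL Y)
    (H : ∀ x, L (f x) = c • lin g (h x)) (l : FL X) : L (lin f l) = c • lin g (lbind h l) := by
  induction l with
  | nil => simp [lin, lbind]
  | cons t l ih => simp [lin, lbind, lin_append, lin_scl, ih, H, smul_comm c]

theorem lin_zero (L : M →ₗ[ℂ] N) (f : X → M) (H : ∀ x, L (f x) = 0) (l : FL X) :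
    L (lin f l) = 0 := by
  induction l with
  | nil => simp [lin]
  | cons t l ih => simp [lin, ih, H]

end

section
variable {A : Type} [Ring A] [Algebra ℂ A] (q : QD A)

theorem linb_mul (n : Bool) (l l' : FL Mon) :
    lin (q.b n) l * lin (q.b n) l' = lin (q.b n) (bil (mulB n) l l') :=
  (lin_bil (LinearMap.mul ℂ A) (q.b n) (q.b n) (q.b n) (mulB n)
    (fun x y => by rw [Sec.mul_bas]; rfl) l l').symm

theorem linb_orth {n n' : Bool} (h : n ≠ n') (l l' : FL Mon) :
    lin (q.b n) l * lin (q.b n') l' = 0 := by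
  have h1 : ∀ x, q.b n x * lin (q.b n') l' = 0 := fun x =>
    lin_zero (LinearMap.mulLeft ℂ (q.b n x)) (q.b n') (fun y => q.b_orth h x y) l'
  exact lin_zero (LinearMap.mulRight ℂ (lin (q.b n') l')) (q.b n) h1 l

theorem linb_single (n : Bool) (m : Mon) : q.b n m = lin (q.b n) [(m, 1)] := by
  simp [lin]

/-- Elements given by their components in the two sectors. -/
def QD.el (l : FL Mon) (c : ℂ) (l' : FL Mon) : A := lin (q.b false) l + c • lin (q.b true) l'

theorem el_mul (l k : FL Mon) (c d : ℂ) (l' k' : FL Mon) : q.el l c l' * q.el k d k' =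
    q.el (bil (mulB false) l k) (c * d) (bil (mulB true) l' k') := by
  simp only [QD.el, add_mul, mul_add, smul_mul_assoc, mul_smul_comm, linb_mul,
    linb_orth q Bool.false_ne_true, linb_orth q Bool.false_ne_true.symm, smul_zero, add_zero,
    zero_add, smul_smul, mul_comm d c]

theorem el_congr {l k : FL Mon} {c d : ℂ} {l' k' : FL Mon} (h : c = d)
    (h1 : prune (collect l) = prune (collect k)) (h2 : prune (collect l') = prune (collect k')) :
    q.el l c l' = q.el k d k' := by
  rw [QD.el, QD.el, h, lin_eq_of_prune _ l _ h1, lin_eq_of_prune _ l' _ h2]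
  simp only [lin_prune, lin_collect]

/-- Abstract copy of the Casimir element. -/
def QD.C : A := q.F * q.E - (Complex.I / 4) • (q.K - q.Ki)

/-- Abstract copy of the coevaluation element. -/
def QD.bb (β : ℂ) : A := q.e false - (2 * Complex.I * β ^ 2) • (q.C * q.e true)

/-- Components of the coevaluation element. -/
def bbL (n : Bool) : FL Mon := cond n [(mK, 1), (mEF, ⟨0, -2⟩)] [(m1, 1)]

/-- Scalar factor. -/
def bs (β : ℂ) (n : Bool) : ℂ := cond n (β ^ 2) 1

theorem bb_el (β : ℂ) : q.bb β = q.el (bbL false) (β ^ 2) (bbL true) := by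
  have c4 : GaussianInt.toComplex ⟨0, -2⟩ = -(2 * Complex.I) := by
    simp [GaussianInt.toComplex_def']
  have hK : q.K ^ 3 * q.e true = -(q.K * q.e true) := by
    rw [pow_succ' q.K 2, mul_assoc q.K, q.K2e, cond_true, mul_neg]
  have hI : Complex.I * Complex.I = -1 := Complex.I_mul_I
  simp only [QD.bb, QD.el, bbL, QD.C, lin, q.b_eq, cond_true, cond_false, one_mul, mul_one, c4,
    map_one, one_smul, add_zero, q.FE, q.rKi, sub_mul, add_mul, smul_mul_assoc, hK]
  have hx : (Complex.I * Complex.I) • (q.K * q.e true) = -(q.K * q.e true) := by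
    rw [hI, neg_smul, one_smul]
  generalize q.K * q.e true = x at *
  linear_combination (norm := module) (-(β ^ 2)) • hx

theorem el_E : q.E = q.el [(mE, 1)] 1 [(mE, 1)] := by
  rw [QD.el, ← linb_single, ← linb_single, q.b_eq, q.b_eq, one_smul]
  simp only [cond_true, cond_false, mul_one, ← mul_add, q.e_sum]
theorem el_F : q.F = q.el [(mF, 1)] 1 [(mF, 1)] := by
  rw [QD.el, ← linb_single, ← linb_single, q.b_eq, q.b_eq, one_smul]
  simp only [cond_true, cond_false, mul_one, one_mul, ← mul_add, q.e_sum]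
theorem el_K : q.K = q.el [(mK, 1)] 1 [(mK, 1)] := by
  rw [QD.el, ← linb_single, ← linb_single, q.b_eq, q.b_eq, one_smul]
  simp only [cond_true, cond_false, mul_one, one_mul, ← mul_add, q.e_sum]
theorem el_one : 1 = q.el [(m1, 1)] 1 [(m1, 1)] := by
  rw [QD.el, ← linb_single, ← linb_single, q.b_eq, q.b_eq, one_smul]
  simp only [cond_false, mul_one, one_mul, q.e_sum]
theorem el_one' : 1 = q.el [(m1, 1)] (-1) [(m1, -1)] := by
  have h := el_one q
  simpa [QD.el, lin] using h

theorem bb_E (β : ℂ) : q.bb β * q.E = q.E * q.bb β := by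
  rw [bb_el, el_E, el_mul, el_mul]
  exact el_congr q (mul_comm _ _) (by decide +kernel) (by decide +kernel)
theorem bb_F (β : ℂ) : q.bb β * q.F = q.F * q.bb β := by
  rw [bb_el, el_F, el_mul, el_mul]
  exact el_congr q (mul_comm _ _) (by decide +kernel) (by decide +kernel)
theorem bb_K (β : ℂ) : q.bb β * q.K = q.K * q.bb β := by
  rw [bb_el, el_K, el_mul, el_mul]
  exact el_congr q (mul_comm _ _) (by decide +kernel) (by decide +kernel)
theorem bb_sq {β : ℂ} (hβ : β ^ 4 = -1) : q.bb β * q.bb β = 1 := by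
  rw [bb_el, el_mul, el_one' q]
  exact el_congr q (by rw [← hβ]; ring) (by decide +kernel) (by decide +kernel)

theorem bb_lin (β : ℂ) (n : Bool) (l : FL Mon) :
    q.bb β * lin (q.b n) l = bs β n • lin (q.b n) (bil (mulB n) (bbL n) l) := by
  rw [bb_el, QD.el, add_mul, smul_mul_assoc]
  cases n
  · rw [linb_orth q Bool.false_ne_true.symm, linb_mul]; simp [bs]
  · rw [linb_orth q Bool.false_ne_true, linb_mul]; simp [bs]

/-- The antipode on monomials. -/
def SL (n : Bool) (m : Mon) : FL Mon :=
  bil (mulB n) (cond m.2.2 [(mK, cond n (-1) 1)] [(m1, 1)])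
    (bil (mulB n) (cond m.2.1 [(mFK, 1)] [(m1, 1)])
      (cond m.1 [(mEK, cond n 1 (-1))] [(m1, 1)]))

/-- Antipode data. -/
structure AP (q : QD A) where
  S : A →ₗ[ℂ] A
  S1 : S 1 = 1
  Smul : ∀ a b : A, S (a * b) = S b * S a
  SE : S q.E = -(q.E * q.Ki)
  SF : S q.F = -(q.K * q.F)
  SK : S q.K = q.Ki

variable {q} (s : AP q)

theorem AP.SKi : s.S q.Ki = q.K := by
  have h : s.S (q.Ki * q.K) = 1 := by rw [q.KiK, s.S1]
  rw [s.Smul, s.SK] at h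
  calc s.S q.Ki = (q.K * q.Ki) * s.S q.Ki := by rw [q.KKi, one_mul]
    _ = q.K := by rw [mul_assoc, h, mul_one]

theorem AP.S_e (n : Bool) : s.S (q.e n) = q.e n := by
  have h : s.S (q.K ^ 2) = q.K ^ 2 := by
    rw [pow_two, s.Smul, s.SK, q.rKi, ← pow_add, ← pow_two]
    change q.K ^ (4 + 2) = _
    rw [pow_add, q.K4, one_mul]
  rw [q.e_eq, map_smul, map_add, map_smul, s.S1, h]

theorem e_Ki (n : Bool) : q.e n * q.Ki = cond n (-1 : ℂ) 1 • (q.K * q.e n) := by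
  have hK : q.e n * q.K ^ 2 = q.K ^ 2 * q.e n := by
    rw [pow_two, ← mul_assoc, q.eK_comm, mul_assoc, q.eK_comm, mul_assoc]
  rw [q.rKi, pow_succ, ← mul_assoc, hK, q.K2e]
  cases n <;> simp [q.eK_comm]

theorem AP.S_b (n : Bool) (m : Mon) : s.S (q.b n m) = lin (q.b n) (SL n m) := by
  have h1 : s.S (q.sec n).e = q.e n := s.S_e n
  have hE : s.S (q.sec n).E = lin (q.b n) [(mEK, cond n 1 (-1))] := by
    change s.S (q.E * q.e n) = _
    rw [s.Smul, s.S_e, s.SE, mul_neg, ← mul_assoc, q.eE_comm, mul_assoc, e_Ki]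
    simp only [lin, q.b_eq, cond_true, cond_false, mul_one]
    cases n <;> simp [mul_assoc]
  have hF : s.S (q.sec n).F = lin (q.b n) [(mFK, 1)] := by
    change s.S (q.F * q.e n) = _
    rw [s.Smul, s.S_e, s.SF, q.KF, neg_neg, ← mul_assoc, q.eF_comm, mul_assoc, q.eK_comm]
    simp [lin, q.b_eq, mul_assoc]
  have hK : s.S (q.sec n).K = lin (q.b n) [(mK, cond n (-1) 1)] := by
    change s.S (q.K * q.e n) = _
    rw [s.Smul, s.S_e, s.SK, e_Ki]
    cases n <;> simp [lin, q.b_eq]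
  have h1' : s.S (q.sec n).e = lin (q.b n) [(m1, 1)] := by
    rw [h1]; simp [lin, q.b_eq]
  rw [SL, ← linb_mul, ← linb_mul, QD.b, Sec.bas, s.Smul, s.Smul, mul_assoc]
  obtain ⟨a, b, c⟩ := m
  cases a <;> cases b <;> cases c <;> simp only [cond_true, cond_false, h1', hE, hF, hK]

theorem tmap3_tt (f g h : A →ₗ[ℂ] A) (a b c : A) : tmap3 f g h (tt a b c) = f a * (g b * h c) := rfl

/-- The map `a ⊗ b ⊗ c ↦ S(a) b β S(c)`. -/
def AP.T5 (β : ℂ) : TP3 ℂ A →ₗ[ℂ] A :=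
  tmap3 s.S LinearMap.id (LinearMap.mulLeft ℂ (q.bb β) ∘ₗ s.S)

/-- The map `a ⊗ b ⊗ c ↦ a β S(b) c`. -/
def AP.T6 (β : ℂ) : TP3 ℂ A →ₗ[ℂ] A :=
  tmap3 LinearMap.id (LinearMap.mulLeft ℂ (q.bb β) ∘ₗ s.S) LinearMap.id

def h5 (n : Bool) (m : Mon3) : FL Mon :=
  bil (mulB n) (SL n m.1) (bil (mulB n) [(m.2.1, 1)] (bil (mulB n) (bbL n) (SL n m.2.2)))

def h6 (n : Bool) (m : Mon3) : FL Mon :=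
  bil (mulB n) [(m.1, 1)] (bil (mulB n) (bil (mulB n) (bbL n) (SL n m.2.1)) [(m.2.2, 1)])

theorem T5_b3 (β : ℂ) (n : Sgn3) (m : Mon3) : s.T5 β (q.b3 n m) =
    lin (q.b n.1) (SL n.1 m.1) * (lin (q.b n.2.1) [(m.2.1, 1)] *
      (bs β n.2.2 • lin (q.b n.2.2) (bil (mulB n.2.2) (bbL n.2.2) (SL n.2.2 m.2.2)))) := by
  rw [AP.T5, QD.b3, tmap3_tt, ← bb_lin, ← s.S_b, ← s.S_b, ← linb_single]
  rfl

theorem T6_b3 (β : ℂ) (n : Sgn3) (m : Mon3) : s.T6 β (q.b3 n m) =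
    lin (q.b n.1) [(m.1, 1)] *
      ((bs β n.2.1 • lin (q.b n.2.1) (bil (mulB n.2.1) (bbL n.2.1) (SL n.2.1 m.2.1))) *
        lin (q.b n.2.2) [(m.2.2, 1)]) := by
  rw [AP.T6, QD.b3, tmap3_tt, ← bb_lin, ← s.S_b, ← linb_single, ← linb_single]
  rfl

theorem T5_diag (β : ℂ) (n : Bool) (l : FL Mon3) :
    s.T5 β (q.ev (n, n, n) l) = bs β n • lin (q.b n) (lbind (h5 n) l) := by
  refine lin_lbind_smul _ _ _ _ _ (fun x => ?_) l
  rw [T5_b3, mul_smul_comm, mul_smul_comm, h5, ← linb_mul q n (SL n x.1),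
    ← linb_mul q n [(x.2.1, 1)]]

theorem T6_diag (β : ℂ) (n : Bool) (l : FL Mon3) :
    s.T6 β (q.ev (n, n, n) l) = bs β n • lin (q.b n) (lbind (h6 n) l) := by
  refine lin_lbind_smul _ _ _ _ _ (fun x => ?_) l
  rw [T6_b3, smul_mul_assoc, mul_smul_comm, h6, ← linb_mul q n [(x.1, 1)],
    ← linb_mul q n _ [(x.2.2, 1)]]

theorem T5_off (β : ℂ) (n : Sgn3) (hn : n.1 ≠ n.2.1 ∨ n.2.1 ≠ n.2.2) (l : FL Mon3) :
    s.T5 β (q.ev n l) = 0 := by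
  refine lin_zero _ _ (fun x => ?_) l
  rw [T5_b3, mul_smul_comm, mul_smul_comm]
  rcases hn with h | h
  · rw [← mul_assoc, linb_orth q h, zero_mul, smul_zero]
  · rw [linb_orth q h, mul_zero, smul_zero]

theorem T6_off (β : ℂ) (n : Sgn3) (hn : n.1 ≠ n.2.1 ∨ n.2.1 ≠ n.2.2) (l : FL Mon3) :
    s.T6 β (q.ev n l) = 0 := by
  refine lin_zero _ _ (fun x => ?_) l
  rw [T6_b3, smul_mul_assoc, mul_smul_comm]
  rcases hn with h | h
  · rw [← mul_assoc, linb_orth q h, zero_mul, smul_zero]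
  · rw [linb_orth q h, mul_zero, smul_zero]

theorem final_scalar {β : ℂ} (hβ : β ^ 4 = -1) (x : A) :
    (Complex.I * β ^ 2) • (bs β true • (GaussianInt.toComplex ⟨0, 1⟩ • x)) = x := by
  rw [smul_smul, smul_smul, mul_assoc]
  have : Complex.I * β ^ 2 * (bs β true * GaussianInt.toComplex ⟨0, 1⟩) = 1 := by
    have h2 : Complex.I ^ 2 = -1 := Complex.I_sq
    simp only [bs, cond_true, GaussianInt.toComplex_def']
    push_cast
    linear_combination Complex.I ^ 2 * hβ - h2
  rw [this, one_smul]

theorem T5_Phi {β : ℂ} (hβ : β ^ 4 = -1) : s.T5 β (q.Phi β) = 1 := by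
  have h0 : lin (q.b false) (lbind (h5 false) LU) = lin (q.b false) [(m1, 1)] :=
    lin_eq_of_prune _ _ _ (by decide +kernel)
  have h1 : lin (q.b true) (lbind (h5 true) L111) = lin (q.b true) [(m1, ⟨0, 1⟩)] :=
    lin_eq_of_prune _ _ _ (by decide +kernel)
  rw [Phi_ev]
  simp only [map_add, map_smul]
  rw [T5_diag, T5_diag, h0, h1, T5_off s β _ (by simp), T5_off s β _ (by simp),
    T5_off s β _ (by simp), T5_off s β _ (by simp), T5_off s β _ (by simp),
    T5_off s β _ (by simp)]
  simp only [lin, add_zero]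
  rw [final_scalar hβ, q.b_eq, q.b_eq]
  simp [bs, q.e_sum]

theorem T6_Psi {β : ℂ} (hβ : β ^ 4 = -1) : s.T6 β (q.Psi β) = 1 := by
  have h0 : lin (q.b false) (lbind (h6 false) LU) = lin (q.b false) [(m1, 1)] :=
    lin_eq_of_prune _ _ _ (by decide +kernel)
  have h1 : lin (q.b true) (lbind (h6 true) M111) = lin (q.b true) [(m1, ⟨0, 1⟩)] :=
    lin_eq_of_prune _ _ _ (by decide +kernel)
  rw [QD.Psi]
  simp only [map_add, map_smul]
  rw [T6_diag, T6_diag, h0, h1, T6_off s β _ (by simp), T6_off s β _ (by simp),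
    T6_off s β _ (by simp), T6_off s β _ (by simp), T6_off s β _ (by simp),
    T6_off s β _ (by simp)]
  simp only [lin, add_zero]
  rw [final_scalar hβ, q.b_eq, q.b_eq]
  simp [bs, q.e_sum]

theorem antipL_mul (x : TP2 ℂ A) (c : ℂ) (hx : antipL s.S x = c • (1 : A)) (y : TP2 ℂ A) :
    antipL s.S (x * y) = c • antipL s.S y := by
  have h : ∀ (x : TP2 ℂ A) (y1 y2 : A), antipL s.S (x * y1 ⊗ₜ[ℂ] y2)
      = s.S y1 * antipL s.S x * y2 := by
    intro x y1 y2
    induction x using TensorProduct.induction_on with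
    | zero => simp
    | tmul a b =>
      rw [Algebra.TensorProduct.tmul_mul_tmul]
      change s.S (a * y1) * (b * y2) = s.S y1 * (s.S a * b) * y2
      rw [s.Smul]; simp only [mul_assoc]
    | add a b ha hb => rw [add_mul, map_add, ha, hb, map_add, mul_add, add_mul]
  induction y using TensorProduct.induction_on with
  | zero => simp
  | tmul a b =>
    rw [h, hx, mul_smul_comm, smul_mul_assoc, mul_one]; rfl
  | add a b ha hb => rw [mul_add, map_add, ha, hb, map_add, smul_add]

theorem antipR_mul (bb : A) (y : TP2 ℂ A) (c : ℂ)
    (hy : antipR (LinearMap.mulLeft ℂ bb ∘ₗ s.S) y = c • bb) (x : TP2 ℂ A) :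
    antipR (LinearMap.mulLeft ℂ bb ∘ₗ s.S) (x * y) =
      c • antipR (LinearMap.mulLeft ℂ bb ∘ₗ s.S) x := by
  have h : ∀ (x1 x2 : A) (y : TP2 ℂ A), antipR (LinearMap.mulLeft ℂ bb ∘ₗ s.S) (x1 ⊗ₜ[ℂ] x2 * y)
      = x1 * antipR (LinearMap.mulLeft ℂ bb ∘ₗ s.S) y * s.S x2 := by
    intro x1 x2 y
    induction y using TensorProduct.induction_on with
    | zero => simp
    | tmul a b =>
      rw [Algebra.TensorProduct.tmul_mul_tmul]
      change (x1 * a) * (bb * s.S (x2 * b)) = x1 * (a * (bb * s.S b)) * s.S x2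
      rw [s.Smul]; simp only [mul_assoc]
    | add a b ha hb => rw [mul_add, map_add, ha, hb, map_add, mul_add, add_mul]
  induction x using TensorProduct.induction_on with
  | zero => simp
  | tmul a b =>
    rw [h, hy, mul_smul_comm, smul_mul_assoc, mul_assoc]; rfl
  | add a b ha hb => rw [add_mul, map_add, ha, hb, map_add, smul_add]

/-- The main result in the abstract algebra. -/
theorem main_abs {A : Type} [Ring A] [Algebra ℂ A] (q : QD A)
    (hind : ∀ P : A → Prop, (∀ c, P (algebraMap ℂ A c)) → P q.E → P q.F → P q.K →
      (∀ a b, P a → P b → P (a + b)) → (∀ a b, P a → P b → P (a * b)) → ∀ a, P a)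
    (β : ℂ) (hβ : β ^ 4 = -1)
    (Δ : A →ₐ[ℂ] TP2 ℂ A)
    (hΔE : Δ q.E = (1:A) ⊗ₜ[ℂ] q.E + q.E ⊗ₜ[ℂ] q.K)
    (hΔF : Δ q.F = q.Ki ⊗ₜ[ℂ] q.F + q.F ⊗ₜ[ℂ] (1:A))
    (hΔK : Δ q.K = q.K ⊗ₜ[ℂ] q.K)
    (ce : A →ₐ[ℂ] ℂ) (hceE : ce q.E = 0) (hceF : ce q.F = 0) (hceK : ce q.K = 1)
    (S : A →ₗ[ℂ] A) (hS1 : S 1 = 1) (hSmul : ∀ a b : A, S (a * b) = S b * S a)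
    (hSE : S q.E = -(q.E * q.Ki)) (hSF : S q.F = -(q.K * q.F)) (hSK : S q.K = q.Ki) :
    (∀ x : A, q.bb β * x = x * q.bb β) ∧
    IsUnit (q.bb β) ∧
    (∀ a : A, antipL S (Δ a) = ce a • (1:A)) ∧
    (∀ a : A, antipR (LinearMap.mulLeft ℂ (q.bb β) ∘ₗ S) (Δ a) = ce a • q.bb β) ∧
    tmap3 S LinearMap.id (LinearMap.mulLeft ℂ (q.bb β) ∘ₗ S) (q.Phi β) = 1 ∧
    tmap3 LinearMap.id (LinearMap.mulLeft ℂ (q.bb β) ∘ₗ S) LinearMap.id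
      (Ring.inverse (q.Phi β)) = 1 := by
  let s : AP q := ⟨S, hS1, hSmul, hSE, hSF, hSK⟩
  have hcen : ∀ x : A, q.bb β * x = x * q.bb β := by
    refine hind _ ?_ (bb_E q β) (bb_F q β) (bb_K q β) ?_ ?_
    · exact fun c => (Algebra.commutes c _).symm
    · intro a b ha hb
      rw [mul_add, add_mul, ha, hb]
    · intro a b ha hb
      rw [← mul_assoc, ha, mul_assoc, hb, mul_assoc]
  have hL : ∀ x y : A, antipL S (x ⊗ₜ[ℂ] y) = S x * y := fun _ _ => rfl
  have hR : ∀ x y : A, antipR (LinearMap.mulLeft ℂ (q.bb β) ∘ₗ S) (x ⊗ₜ[ℂ] y)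
      = x * (q.bb β * S y) := fun _ _ => rfl
  have hSKi : S q.Ki = q.K := s.SKi
  refine ⟨hcen, ⟨⟨_, _, bb_sq q hβ, bb_sq q hβ⟩, rfl⟩, ?_, ?_, T5_Phi s hβ, ?_⟩
  · refine hind _ ?_ ?_ ?_ ?_ ?_ ?_
    · intro c
      rw [AlgHom.commutes, AlgHom.commutes, Algebra.algebraMap_eq_smul_one, map_smul,
        Algebra.TensorProduct.one_def, hL, hS1, mul_one]
      rfl
    · rw [hΔE, map_add, hL, hL, hS1, hSE, hceE, zero_smul, neg_mul, mul_assoc, q.KiK, one_mul,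
        mul_one, add_neg_cancel]
    · rw [hΔF, map_add, hL, hL, hSKi, hSF, hceF, zero_smul, mul_one, add_neg_cancel]
    · rw [hΔK, hL, hSK, q.KiK, hceK, one_smul]
    · intro a b ha hb
      rw [map_add, map_add, map_add, ha, hb, add_smul]
    · intro a b ha hb
      rw [map_mul Δ, map_mul ce, antipL_mul s _ _ ha]
      change _ • antipL S _ = _
      rw [hb, smul_smul]
  · refine hind _ ?_ ?_ ?_ ?_ ?_ ?_
    · intro c
      rw [AlgHom.commutes, AlgHom.commutes, Algebra.algebraMap_eq_smul_one, map_smul,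
        Algebra.TensorProduct.one_def, hR, hS1, mul_one, one_mul]
      rfl
    · rw [hΔE, map_add, hR, hR, hSE, hSK, hceE, zero_smul, ← mul_assoc q.E, ← hcen q.E, one_mul,
        mul_neg, mul_assoc, neg_add_cancel]
    · rw [hΔF, map_add, hR, hR, hSF, hS1, hceF, zero_smul, mul_one, mul_neg, ← mul_assoc (q.bb β),
        hcen q.K, mul_neg, mul_assoc q.K, ← mul_assoc q.Ki, q.KiK, one_mul, hcen, neg_add_cancel]
    · rw [hΔK, hR, hSK, hcen q.Ki, ← mul_assoc, q.KKi, one_mul, hceK, one_smul]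
    · intro a b ha hb
      rw [map_add, map_add, map_add, ha, hb, add_smul]
    · intro a b ha hb
      rw [map_mul Δ, map_mul ce, antipR_mul s _ _ _ hb]
      change _ • antipR (LinearMap.mulLeft ℂ (q.bb β) ∘ₗ S) _ = _
      rw [ha, smul_smul, mul_comm]
  · rw [inverse_Phi q hβ]
    exact T6_Psi s hβ

end

end QCalc

/-! ### Specialisation to `Q` -/

namespace QCalc

/-- The generators of `Q` satisfy the relations. -/
def dQ : QD Q where
  E := gE
  F := gF
  K := gK
  Ki := gKi
  KKi := by
    have := RingQuot.mkAlgHom_rel ℂ QRel.KKi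
    rw [map_mul, map_one] at this
    exact this
  KiK := by
    have := RingQuot.mkAlgHom_rel ℂ QRel.KiK
    rw [map_mul, map_one] at this
    exact this
  KEKi := by
    have := RingQuot.mkAlgHom_rel ℂ QRel.KEKi
    rw [map_neg, map_mul, map_mul] at this
    exact this
  KFKi := by
    have := RingQuot.mkAlgHom_rel ℂ QRel.KFKi
    rw [map_neg, map_mul, map_mul] at this
    exact this
  EF := by
    have := RingQuot.mkAlgHom_rel ℂ QRel.EF
    rw [map_sub, map_mul, map_mul, map_smul, map_sub] at this
    exact this
  E2 := by
    have := RingQuot.mkAlgHom_rel ℂ QRel.Esq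
    rw [map_pow, map_zero] at this
    exact this
  F2 := by
    have := RingQuot.mkAlgHom_rel ℂ QRel.Fsq
    rw [map_pow, map_zero] at this
    exact this
  K4 := by
    have := RingQuot.mkAlgHom_rel ℂ QRel.K4
    rw [map_pow, map_one] at this
    exact this

theorem Q_ind (P : Q → Prop) (hc : ∀ c, P (algebraMap ℂ Q c)) (hE : P gE) (hF : P gF) (hK : P gK)
    (hadd : ∀ a b, P a → P b → P (a + b)) (hmul : ∀ a b, P a → P b → P (a * b)) (a : Q) : P a := by
  obtain ⟨x, rfl⟩ := RingQuot.mkAlgHom_surjective ℂ QRel a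
  have hKi : P gKi := by
    have h : gKi = gK ^ 3 := dQ.rKi
    have h3 : gK ^ 3 = gK * gK * gK := by rw [pow_succ, pow_two]
    rw [h, h3]
    exact hmul _ _ (hmul _ _ hK hK) hK
  refine FreeAlgebra.induction ℂ QGen (motive := fun x => P (RingQuot.mkAlgHom ℂ QRel x))
    ?_ ?_ ?_ ?_ x
  · intro c; rw [AlgHom.commutes]; exact hc c
  · intro g; cases g
    · exact hE
    · exact hF
    · exact hK
    · exact hKi
  · intro a b ha hb; rw [map_mul]; exact hmul _ _ ha hb
  · intro a b ha hb; rw [map_add]; exact hadd _ _ ha hb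

theorem Phi_eq (β : ℂ) : Phi β = dQ.Phi β := rfl

theorem bb_eq (β : ℂ) : bbEl β = dQ.bb β := rfl

end QCalc

/-- with the coevaluation element `b = e₀ − 2iβ²·C·e₁` (and `α = 1`),
`(Q, Φ, S, 1, b)` is a quasi-Hopf algebra: `b` is central and invertible and the
quasi-Hopf antipode axioms hold. -/
theorem statement10 (β : ℂ) (hβ : β ^ 4 = -1)
    (Δ : Q →ₐ[ℂ] TP2 ℂ Q)
    (hΔE : Δ gE = (1:Q) ⊗ₜ[ℂ] gE + gE ⊗ₜ[ℂ] gK)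
    (hΔF : Δ gF = gKi ⊗ₜ[ℂ] gF + gF ⊗ₜ[ℂ] (1:Q))
    (hΔK : Δ gK = gK ⊗ₜ[ℂ] gK)
    (ce : Q →ₐ[ℂ] ℂ) (hceE : ce gE = 0) (hceF : ce gF = 0) (hceK : ce gK = 1)
    (S : Q →ₗ[ℂ] Q) (hS1 : S 1 = 1) (hSmul : ∀ a b : Q, S (a * b) = S b * S a)
    (hSE : S gE = -(gE * gKi)) (hSF : S gF = -(gK * gF)) (hSK : S gK = gKi) :
    (∀ x : Q, bbEl β * x = x * bbEl β) ∧
    IsUnit (bbEl β) ∧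
    (∀ a : Q, antipL S (Δ a) = ce a • (1:Q)) ∧
    (∀ a : Q, antipR (LinearMap.mulLeft ℂ (bbEl β) ∘ₗ S) (Δ a) = ce a • bbEl β) ∧
    tmap3 S LinearMap.id (LinearMap.mulLeft ℂ (bbEl β) ∘ₗ S) (Phi β) = 1 ∧
    tmap3 LinearMap.id (LinearMap.mulLeft ℂ (bbEl β) ∘ₗ S) LinearMap.id
      (Ring.inverse (Phi β)) = 1 := by
  rw [QCalc.Phi_eq β, QCalc.bb_eq β]
  exact QCalc.main_abs QCalc.dQ QCalc.Q_ind β hβ Δ hΔE hΔF hΔK ce hceE hceF hceK S hS1 hSmul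
    hSE hSF hSK
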